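/- Let μ and ν be compactly supported probability measures on ℝ with μ nondegenerate, and let ρ be a free additive convolution of μ and ν. For a real number z, the equation F̂_{μ,ν}(h) = z has a solution h ∈ dom(F̂_{μ,ν}) with h < h*_{μ,ν} if and only if z < z*_ρ; and when z < z*_ρ, this solution h is unique and satisfies G_ρ(z) = G_ν(h). -/

import Mathlib

/-!
Write `J = F̂(-∞, h*)`. On `(-∞, h*)` the function `F̂` is analytic with positive derivative and tends
to `-∞` at `-∞`, so it is strictly increasing there and `J` is an open lower ray; its inverse
`ω : J → (-∞, h*)` is the subordination function. The definition of a free convolution gives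
`G_ρ ∘ F̂ = G_ν` near `-∞`, and by analytic continuation `G_ρ = G_ν ∘ ω` wherever `J` and
`(-∞, a_ρ)` overlap (`subordination`). All claims then follow from `J = (-∞, a_ρ)` (`image_eq`).

Both inclusions rest on a Pringsheim-type principle (`no_extension`): a Stieltjes transform `G_κ`
has no analytic continuation from the left through `a_κ`, because its Taylor coefficients are the
moments of `(λ - z)⁻¹`, which grow too fast as `z ↑ a_κ`.

* If `a_ρ ∈ J`, then `G_ν ∘ ω` continues `G_ρ` analytically through `a_ρ`, a contradiction
  (`image_subset`).
* Suppose `J = (-∞, z₀)` with `z₀ < a_ρ` (`not_image_Iio`). Put `ω_ν = ω` and let `ω_μ(z) < a_μ` be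
  the point with `G_μ(ω_μ(z)) = G_ν(ω_ν(z))`. With `H_κ(z) = -1 / G_κ(z) - z` one has
  `ω_ν(z) = z + H_μ(ω_μ(z))`, `ω_μ(z) = z + H_ν(ω_ν(z))` and
  `ω_μ(z) + ω_ν(z) = z - 1 / G_ρ(z)`. The moments of `(λ - z)⁻¹` are log-convex, so by Kaluza's
  theorem (`kaluza`) the functions `H_κ` are absolutely monotone; comparing Taylor coefficients
  degree by degree, so are `ω_μ` and `ω_ν`, with derivatives at least `1` (`tc_fixed_point`). Their
  sum is analytic at `z₀`, and nonnegativity lets its coefficients dominate those of each summand,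
  so both functions continue analytically to `z₀` (`extend_of_sum`). If the value of `ω_ν` at `z₀`
  were `a_ν`, or that of `ω_μ` were `a_μ`, then composing `G_ρ` with a local inverse would continue
  `G_ν` or `G_μ` through the edge of its support (`no_extension_curve`). Hence `h* = ω_ν(z₀)` is an
  interior point of the domain of `F̂`, and `F̂ ∘ ω = id` gives `F̂'(h*) > 0`, contradicting the
  maximality of `h*` (`hstar_not_regular`).
-/


open MeasureTheory Filter Set

noncomputable section

/-- The topological support of a Borel measure on `ℝ`. -/
def msupp (μ : Measure ℝ) : Set ℝ := {x : ℝ | ∀ U ∈ nhds x, μ U ≠ 0}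

/-- Compact support: some compact set has full measure. -/
def HasCompactSupp (μ : Measure ℝ) : Prop := ∃ K : Set ℝ, IsCompact K ∧ μ K = 1

/-- `a_μ`, the infimum of the support. -/
def aInf (μ : Measure ℝ) : ℝ := sInf (msupp μ)

/-- `b_μ`, the supremum of the support. -/
def bSup (μ : Measure ℝ) : ℝ := sSup (msupp μ)

/-- The (real) Stieltjes transform `G_μ(z) = ∫ (λ - z)⁻¹ dμ(λ)`. -/
def Gst (μ : Measure ℝ) (z : ℝ) : ℝ := ∫ l, (l - z)⁻¹ ∂μ

/-- `G_μ(a_μ) = lim_{z ↑ a_μ} G_μ(z) ∈ (0,∞]`, as the supremum (in `EReal`) of the values of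
`G_μ` on `(-∞, a_μ)` (the two agree since `G_μ` is increasing there). -/
def GaSup (μ : Measure ℝ) : EReal :=
  sSup ((fun z => ((Gst μ z : ℝ) : EReal)) '' Set.Iio (aInf μ))

/-- `G_μ(b_μ) = lim_{z ↓ b_μ} G_μ(z) ∈ [-∞,0)`, as the infimum (in `EReal`) of the values of
`G_μ` on `(b_μ, ∞)` (the two agree since `G_μ` is increasing there). -/
def GbInf (μ : Measure ℝ) : EReal :=
  sInf ((fun z => ((Gst μ z : ℝ) : EReal)) '' Set.Ioi (bSup μ))

/-- The interval `D̂_μ = (-G_μ(a_μ), -G_μ(b_μ)) ⊆ ℝ`. -/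
def Dhat (μ : Measure ℝ) : Set ℝ :=
  {u : ℝ | -(GaSup μ) < (u : EReal) ∧ (u : EReal) < -(GbInf μ)}

/-- The inverse `G_μ^⟨-1⟩` of the restriction of `G_μ` to `ℝ ∖ [a_μ, b_μ]`. -/
def Ginv (μ : Measure ℝ) (g : ℝ) : ℝ :=
  Function.invFunOn (Gst μ) (Set.Iio (aInf μ) ∪ Set.Ioi (bSup μ)) g

/-- The real `R`-transform `R̂_μ(u) = G_μ^⟨-1⟩(-u) - u⁻¹`, meaningful for `u ∈ D̂_μ ∖ {0}`. -/
def Rhat (μ : Measure ℝ) (u : ℝ) : ℝ := Ginv μ (-u) - u⁻¹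

/-- `ρ` is a free additive convolution of `μ` and `ν`. -/
def IsFreeAdd (μ ν ρ : Measure ℝ) : Prop :=
  IsProbabilityMeasure ρ ∧ HasCompactSupp ρ ∧
  ∃ ε > (0 : ℝ), ∀ u : ℝ, u ∈ Set.Ioo (-ε) ε → u ≠ 0 →
    u ∈ Dhat ρ ∧ u ∈ Dhat μ ∧ u ∈ Dhat ν ∧ Rhat ρ u = Rhat μ u + Rhat ν u

/-- `μ` is nondegenerate: not a point mass. -/
def Nondeg (μ : Measure ℝ) : Prop := ¬ ∃ c : ℝ, μ = Measure.dirac c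

/-- The logarithmic potential `U_ρ(z) = ∫ log |z - λ| dρ(λ)`. -/
def Upot (ρ : Measure ℝ) (z : ℝ) : ℝ := ∫ l, Real.log |z - l| ∂ρ

/-- `E_{μ,ν,z}(g) = ∫₀^g s R̂_μ'(-s) ds + ∫ log (λ - z + R̂_μ(-g)) dν(λ)`. -/
def Efun (μ ν : Measure ℝ) (z : ℝ) (g : ℝ) : ℝ :=
  (∫ s in (0:ℝ)..g, s * deriv (Rhat μ) (-s)) + ∫ l, Real.log (l - z + Rhat μ (-g)) ∂ν

/-- The domain `Ê_{μ,ν,z}` of `E_{μ,ν,z}`. -/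
def Ehat (μ ν : Measure ℝ) (z : ℝ) : Set ℝ :=
  {g : ℝ | -g ∈ Dhat μ ∧ g ≠ 0 ∧ z - Rhat μ (-g) < aInf ν}

/-- `F̂_{μ,ν}(h) = R̂_μ(-G_ν(h)) + h`. -/
def Fhat (μ ν : Measure ℝ) (h : ℝ) : ℝ := Rhat μ (-(Gst ν h)) + h

/-- The domain of `F̂_{μ,ν}`. -/
def FhatDom (μ ν : Measure ℝ) : Set ℝ := {h : ℝ | h < aInf ν ∧ -(Gst ν h) ∈ Dhat μ}

/-- `Ĥ_{μ,ν}`: points of the domain to the left of which `F̂_{μ,ν}'` is positive. -/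
def Hhat (μ ν : Measure ℝ) : Set ℝ :=
  {h : ℝ | h ∈ FhatDom μ ν ∧ ∀ t ∈ FhatDom μ ν, t < h → 0 < deriv (Fhat μ ν) t}

/-- `h*_{μ,ν} = sup Ĥ_{μ,ν}`. -/
def hstar (μ ν : Measure ℝ) : ℝ := sSup (Hhat μ ν)

end

/-! ### Taylor coefficients of real analytic functions -/

/-- The `n`-th Taylor coefficient of `f` at `z`. -/
noncomputable def tc (f : ℝ → ℝ) (z : ℝ) (n : ℕ) : ℝ := iteratedDeriv n f z / (n.factorial : ℝ)

theorem tc_series {f : ℝ → ℝ} {z : ℝ} (hf : AnalyticAt ℝ f z) :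
    HasFPowerSeriesAt f (FormalMultilinearSeries.ofScalars ℝ (tc f z)) z :=
  hf.hasFPowerSeriesAt

theorem tc_eq_coeff {f : ℝ → ℝ} {z : ℝ} {p : FormalMultilinearSeries ℝ ℝ ℝ}
    (h : HasFPowerSeriesAt f p z) (n : ℕ) : tc f z n = p.coeff n := by
  rw [h.eq_formalMultilinearSeries (tc_series h.analyticAt),
    FormalMultilinearSeries.coeff_ofScalars]

theorem tc_congr {f g : ℝ → ℝ} {z : ℝ} (h : f =ᶠ[nhds z] g) (n : ℕ) : tc f z n = tc g z n := by
  unfold tc; rw [h.iteratedDeriv_eq n]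

theorem tc_zero (f : ℝ → ℝ) (z : ℝ) : tc f z 0 = f z := by simp [tc]

theorem tc_one (f : ℝ → ℝ) (z : ℝ) : tc f z 1 = deriv f z := by simp [tc]

theorem tc_id (z : ℝ) {n : ℕ} (hn : 2 ≤ n) : tc (fun x => x) z n = 0 := by
  have h : HasFPowerSeriesAt (fun x : ℝ => x)
      ((ContinuousLinearMap.id ℝ ℝ).fpowerSeries z) z :=
    (ContinuousLinearMap.id ℝ ℝ).hasFPowerSeriesAt z
  obtain ⟨m, rfl⟩ := Nat.exists_eq_add_of_le' hn
  rw [tc_eq_coeff h]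
  simp [FormalMultilinearSeries.coeff]

theorem tc_add {f g : ℝ → ℝ} {z : ℝ} (hf : AnalyticAt ℝ f z) (hg : AnalyticAt ℝ g z) (n : ℕ) :
    tc (fun x => f x + g x) z n = tc f z n + tc g z n := by
  have h := (tc_series hf).add (tc_series hg)
  rw [← FormalMultilinearSeries.ofScalars_add] at h
  rw [show (fun x => f x + g x) = f + g from rfl, tc_eq_coeff h,
    FormalMultilinearSeries.coeff_ofScalars]
  rfl

theorem tc_neg {f : ℝ → ℝ} {z : ℝ} (n : ℕ) :
    tc (fun x => - f x) z n = - tc f z n := by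
  unfold tc
  rw [show (fun x => - f x) = -f from rfl, iteratedDeriv_neg]
  ring

theorem tc_mul {f g : ℝ → ℝ} {z : ℝ} (hf : AnalyticAt ℝ f z) (hg : AnalyticAt ℝ g z) (n : ℕ) :
    tc (fun x => f x * g x) z n = ∑ i ∈ Finset.range (n + 1), tc f z i * tc g z (n - i) := by
  unfold tc
  rw [show (fun x => f x * g x) = f * g from rfl,
    iteratedDeriv_mul (hf.contDiffAt) (hg.contDiffAt), Finset.sum_div]
  refine Finset.sum_congr rfl fun i hi => ?_
  have hi' : i ≤ n := Nat.lt_succ_iff.mp (Finset.mem_range.mp hi)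
  rw [Nat.cast_choose ℝ hi']
  have h1 : (i.factorial : ℝ) ≠ 0 := by positivity
  have h2 : ((n - i).factorial : ℝ) ≠ 0 := by positivity
  have h3 : (n.factorial : ℝ) ≠ 0 := by positivity
  field_simp

theorem tc_comp {f g : ℝ → ℝ} {z : ℝ} (hf : AnalyticAt ℝ f (g z)) (hg : AnalyticAt ℝ g z)
    (n : ℕ) :
    tc (fun x => f (g x)) z n =
      ∑ c : Composition n, tc f (g z) c.length * ∏ i, tc g z (c.blocksFun i) := by
  have h := (tc_series hf).comp (tc_series hg)
  rw [show (fun x => f (g x)) = f ∘ g from rfl, tc_eq_coeff h]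
  simp only [FormalMultilinearSeries.coeff, FormalMultilinearSeries.comp,
    _root_.sum_apply]
  refine Finset.sum_congr rfl fun c _ => ?_
  rw [FormalMultilinearSeries.compAlongComposition_apply]
  simp [FormalMultilinearSeries.applyComposition, FormalMultilinearSeries.ofScalars,
    List.prod_ofFn]

/-- If `f` has nonnegative Taylor coefficients in positive degree, and `g` in degrees between `1`
and `n - 1`, then the `n`-th coefficient of `f ∘ g` is at least its term linear in the `n`-th
coefficient of `g`: the other compositions of `n` in Faà di Bruno's formula contribute
nonnegatively. -/
theorem tc_comp_ge {f g : ℝ → ℝ} {z : ℝ} (hf : AnalyticAt ℝ f (g z)) (hg : AnalyticAt ℝ g z)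
    {n : ℕ} (hn : 1 ≤ n) (hfn : ∀ k, 1 ≤ k → 0 ≤ tc f (g z) k)
    (hgn : ∀ k, 1 ≤ k → k < n → 0 ≤ tc g z k) :
    tc f (g z) 1 * tc g z n ≤ tc (fun x => f (g x)) z n := by
  rw [tc_comp hf hg]
  have hpos : 0 < n := hn
  have h1 : tc f (g z) 1 * tc g z n =
      tc f (g z) (Composition.single n hpos).length *
        ∏ i, tc g z ((Composition.single n hpos).blocksFun i) := by
    rw [Finset.prod_congr rfl fun i _ => by rw [Composition.single_blocksFun hpos i],
      Finset.prod_const, Finset.card_univ, Fintype.card_fin, Composition.single_length, pow_one]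
  rw [h1, ← Finset.add_sum_erase _ _ (Finset.mem_univ (Composition.single n hpos))]
  refine le_add_of_nonneg_right (Finset.sum_nonneg fun c hc => ?_)
  have hc' := (Composition.ne_single_iff hpos).mp (Finset.ne_of_mem_erase hc)
  refine mul_nonneg (hfn _ (c.length_pos_of_pos hpos)) (Finset.prod_nonneg fun i _ => ?_)
  exact hgn _ (c.one_le_blocksFun i) (hc' i)

/-- Near a point of analyticity the Taylor series have a common lower bound on their radii. -/
theorem tc_bound_near {S : ℝ → ℝ} {z₀ : ℝ} (hS : AnalyticAt ℝ S z₀) :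
    ∃ r : NNReal, 0 < r ∧ ∀ᶠ z in nhds z₀, AnalyticAt ℝ S z ∧
      ∃ C : ℝ, ∀ n, |tc S z n| * (r : ℝ) ^ n ≤ C := by
  obtain ⟨p, R, hp⟩ := hS
  obtain ⟨r, hr0, hr⟩ := ENNReal.lt_iff_exists_nnreal_btwn.mp hp.r_pos
  have hr0' : 0 < r := by exact_mod_cast hr0
  refine ⟨r / 3, by positivity, ?_⟩
  filter_upwards [Metric.ball_mem_nhds z₀ (show (0 : ℝ) < r / 3 by positivity)] with z hz
  have hz' : (‖z - z₀‖₊ : ℝ) < r / 3 := by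
    simpa [Real.dist_eq] using hz
  have hzn : ‖z - z₀‖₊ < r / 3 := by exact_mod_cast hz'
  have hr3 : r / 3 < r := div_lt_self hr0' (by norm_num)
  have hlt : (‖z - z₀‖₊ : ENNReal) < R :=
    lt_trans (by exact_mod_cast hzn.trans hr3) hr
  have h := hp.changeOrigin hlt
  rw [add_sub_cancel] at h
  refine ⟨h.analyticAt, ?_⟩
  have hrad : ((r / 3 : NNReal) : ENNReal) < (p.changeOrigin (z - z₀)).radius := by
    refine lt_of_lt_of_le ?_ h.r_le
    rw [lt_tsub_iff_right]
    refine lt_trans ?_ hr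
    rw [← ENNReal.coe_add]
    refine ENNReal.coe_lt_coe.mpr ?_
    have : (r / 3 : NNReal) + ‖z - z₀‖₊ < r := by
      rw [← NNReal.coe_lt_coe]; push_cast
      have : (0 : ℝ) < r := hr0'
      simp only [coe_nnnorm] at hz'
      linarith
    exact this
  obtain ⟨C, -, hC⟩ := FormalMultilinearSeries.norm_mul_pow_le_of_lt_radius _ hrad
  refine ⟨C, fun n => ?_⟩
  rw [tc_eq_coeff h.hasFPowerSeriesAt n, ← Real.norm_eq_abs]
  simpa [FormalMultilinearSeries.norm_apply_eq_norm_coef] using hC n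

/-- Two functions analytic to the left of `z₀` with nonnegative Taylor coefficients of positive
order, whose sum extends analytically to `z₀`: each of them extends analytically to `z₀`, because
nonnegativity lets the coefficients of the sum bound those of each summand. -/
theorem extend_of_sum {f g S : ℝ → ℝ} {z₀ : ℝ} (hf : AnalyticOnNhd ℝ f (Iio z₀))
    (hg : AnalyticOnNhd ℝ g (Iio z₀)) (hS : AnalyticAt ℝ S z₀)
    (hfn : ∀ z < z₀, ∀ n, 1 ≤ n → 0 ≤ tc f z n) (hgn : ∀ z < z₀, ∀ n, 1 ≤ n → 0 ≤ tc g z n)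
    (hsum : ∀ z < z₀, f z + g z = S z) :
    ∃ F : ℝ → ℝ, AnalyticAt ℝ F z₀ ∧ ∀ᶠ z in nhdsWithin z₀ (Iio z₀), f z = F z := by
  obtain ⟨r, hr0, hr⟩ := tc_bound_near hS
  have hr0' : (0 : ℝ) < r := hr0
  have e1 : ∀ᶠ z in nhdsWithin z₀ (Iio z₀), z₀ - r < z :=
    nhdsWithin_le_nhds (Ioi_mem_nhds (by linarith))
  obtain ⟨z, ⟨⟨-, C, hC⟩, hz1⟩, hz⟩ :=
    (((hr.filter_mono nhdsWithin_le_nhds).and e1).and self_mem_nhdsWithin).exists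
  have hz : z < z₀ := hz
  have hfz := hf z hz
  have hgz := hg z hz
  have hSz : ∀ n, tc S z n = tc f z n + tc g z n := fun n => by
    rw [← tc_add hfz hgz]
    refine tc_congr ?_ n
    filter_upwards [Iio_mem_nhds hz] with x hx using (hsum x hx).symm
  set p := FormalMultilinearSeries.ofScalars ℝ (tc f z) with hp
  have hrad : (r : ENNReal) ≤ p.radius := by
    refine p.le_radius_of_eventually_le C ?_
    filter_upwards [eventually_ge_atTop 1] with n hn
    rw [hp, FormalMultilinearSeries.ofScalars_norm, Real.norm_eq_abs, abs_of_nonneg (hfn z hz n hn)]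
    refine le_trans ?_ (hC n)
    gcongr
    rw [hSz n]
    exact (le_add_of_nonneg_right (hgn z hz n hn)).trans (le_abs_self _)
  have hpr : 0 < p.radius := lt_of_lt_of_le (by exact_mod_cast hr0) hrad
  have hpF : HasFPowerSeriesOnBall (fun x => p.sum (x - z)) p z p.radius := by
    simpa using (p.hasFPowerSeriesOnBall hpr).comp_sub z
  have hball : ∀ x, |x - z| < r → x ∈ Metric.eball z p.radius := fun x hx => by
    refine lt_of_lt_of_le ?_ hrad
    rw [edist_dist, Real.dist_eq]
    exact (ENNReal.ofReal_lt_iff_lt_toReal (abs_nonneg _) ENNReal.coe_ne_top).mpr hx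
  refine ⟨fun x => p.sum (x - z), hpF.analyticAt_of_mem (hball _ ?_), ?_⟩
  · rw [abs_of_pos (by linarith)]; linarith
  have heq : EqOn f (fun x => p.sum (x - z)) (Ioo (z - r) z₀) := by
    refine AnalyticOnNhd.eqOn_of_preconnected_of_eventuallyEq (𝕜 := ℝ) (z₀ := z)
      (fun x hx => hf x hx.2) (fun x hx => hpF.analyticAt_of_mem (hball _ ?_))
      isPreconnected_Ioo ⟨by linarith, hz⟩ ?_
    · rw [abs_lt]; constructor <;> linarith [hx.1, hx.2]
    · obtain ⟨R, hR⟩ := tc_series hfz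
      filter_upwards [Metric.eball_mem_nhds z hR.r_pos, Metric.eball_mem_nhds z hpr] with x hx hx'
      have a1 := hR.hasSum (y := x - z) (by simpa [edist_eq_enorm_sub] using hx)
      have a2 := hpF.hasSum (y := x - z) (by simpa [edist_eq_enorm_sub] using hx')
      rw [add_sub_cancel] at a1 a2
      exact a1.unique a2
  filter_upwards [Ioo_mem_nhdsLT (show z - r < z₀ by linarith)] with x hx using heq hx

/-- Analytic local inverse at a point with positive derivative. -/
theorem exists_local_inverse {f : ℝ → ℝ} {x : ℝ} (hf : AnalyticAt ℝ f x) (hd : 0 < deriv f x) :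
    ∃ φ : ℝ → ℝ, AnalyticAt ℝ φ (f x) ∧ φ (f x) = x ∧ (∀ᶠ y in nhds (f x), f (φ y) = y) ∧
      0 < deriv φ (f x) := by
  have hs : HasStrictDerivAt f (deriv f x) x := hf.hasStrictDerivAt
  refine ⟨hs.localInverse f _ x hd.ne', hf.analyticAt_localInverse hd.ne',
    HasStrictFDerivAt.localInverse_apply_image .., hs.eventually_right_inverse hd.ne', ?_⟩
  rw [(hs.to_localInverse hd.ne').hasDerivAt.deriv]
  positivity

theorem analyticAt_of_injOn {f g : ℝ → ℝ} {U : Set ℝ} {y : ℝ} (hU : IsOpen U)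
    (hinj : InjOn f U) (hf : AnalyticAt ℝ f (g y)) (hd : 0 < deriv f (g y))
    (hg : ∀ᶠ t in nhds y, g t ∈ U ∧ f (g t) = t) : AnalyticAt ℝ g y := by
  obtain ⟨φ, h1, h2, h3, -⟩ := exists_local_inverse hf hd
  have hy := hg.self_of_nhds
  rw [hy.2] at h1 h2 h3
  refine h1.congr ?_
  have hmem : ∀ᶠ t in nhds y, φ t ∈ U :=
    h1.continuousAt.eventually_mem (hU.mem_nhds (by rw [h2]; exact hy.1))
  filter_upwards [h3, hg, hmem] with t a b c
  exact hinj c b.1 (a.trans b.2.symm)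

/-- A function with positive derivative sends left neighbourhoods to left neighbourhoods. -/
theorem tendsto_left_of_deriv_pos {φ : ℝ → ℝ} {y : ℝ} (hφ : AnalyticAt ℝ φ y)
    (hd : 0 < deriv φ y) :
    Tendsto φ (nhdsWithin y (Iio y)) (nhdsWithin (φ y) (Iio (φ y))) := by
  refine tendsto_nhdsWithin_iff.mpr
    ⟨hφ.continuousAt.tendsto.mono_left nhdsWithin_le_nhds, ?_⟩
  have h := hasDerivAt_iff_tendsto_slope_left_right.mp hφ.differentiableAt.hasDerivAt
  filter_upwards [h.1.eventually (lt_mem_nhds hd), self_mem_nhdsWithin] with x hx hxy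
  have hxy : x < y := hxy
  rw [slope_def_field] at hx
  by_contra hc
  have hc : φ y ≤ φ x := not_lt.mp hc
  have := div_nonpos_of_nonneg_of_nonpos (sub_nonneg.mpr hc) (sub_nonpos.mpr hxy.le)
  linarith

theorem eventuallyEq_of_left {f g : ℝ → ℝ} {y : ℝ} (hf : AnalyticAt ℝ f y)
    (hg : AnalyticAt ℝ g y) (h : ∀ᶠ x in nhdsWithin y (Iio y), f x = g x) : f =ᶠ[nhds y] g := by
  refine (hf.frequently_eq_iff_eventually_eq hg).mp ?_
  exact h.frequently.filter_mono (nhdsWithin_mono _ fun x hx => ne_of_lt hx)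

/-! ### Supports, moments and Taylor coefficients of the Stieltjes transform -/

theorem msupp_eq_support (κ : Measure ℝ) : msupp κ = κ.support := by
  ext x
  simp [msupp, Measure.mem_support_iff_forall, pos_iff_ne_zero]

theorem msupp_bdd {κ : Measure ℝ} [IsProbabilityMeasure κ] (hc : HasCompactSupp κ) :
    BddBelow (msupp κ) ∧ BddAbove (msupp κ) := by
  obtain ⟨K, hK, hK1⟩ := hc
  have hmem : K ∈ ae κ := by
    rw [mem_ae_iff]
    exact (prob_compl_eq_zero_iff hK.measurableSet).mpr hK1
  have hsub : msupp κ ⊆ K := by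
    rw [msupp_eq_support]
    exact Measure.support_subset_of_isClosed hK.isClosed hmem
  exact ⟨hK.bddBelow.mono hsub, hK.bddAbove.mono hsub⟩

theorem ae_mem_Icc {κ : Measure ℝ} [IsProbabilityMeasure κ] (hc : HasCompactSupp κ) :
    ∀ᵐ l ∂κ, aInf κ ≤ l ∧ l ≤ bSup κ := by
  have h : κ.support ∈ ae κ := Measure.support_mem_ae
  filter_upwards [h] with l hl
  rw [← msupp_eq_support] at hl
  exact ⟨csInf_le (msupp_bdd hc).1 hl, le_csSup (msupp_bdd hc).2 hl⟩

theorem aInf_le_bSup {κ : Measure ℝ} [IsProbabilityMeasure κ] (hc : HasCompactSupp κ) :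
    aInf κ ≤ bSup κ := by
  obtain ⟨l, h1, h2⟩ := (ae_mem_Icc hc).exists
  exact h1.trans h2

theorem mass_left {κ : Measure ℝ} [IsProbabilityMeasure κ] {x : ℝ}
    (hx : aInf κ < x) : 0 < κ (Iio x) := by
  have hne : (msupp κ).Nonempty := by
    rw [msupp_eq_support]; exact Measure.nonempty_support (IsProbabilityMeasure.ne_zero κ)
  obtain ⟨y, hy, hyx⟩ := exists_lt_of_csInf_lt hne hx
  exact pos_iff_ne_zero.mpr (hy _ (Iio_mem_nhds hyx))

/-- The `k`-th moment of `(λ - z)⁻¹` under `κ`. -/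
noncomputable def mom (κ : Measure ℝ) (z : ℝ) (k : ℕ) : ℝ := ∫ l, ((l - z)⁻¹) ^ k ∂κ

theorem ae_inv_bounds {κ : Measure ℝ} [IsProbabilityMeasure κ] (hc : HasCompactSupp κ) {z : ℝ}
    (hz : z < aInf κ) :
    ∀ᵐ l ∂κ, (bSup κ - z)⁻¹ ≤ (l - z)⁻¹ ∧ (l - z)⁻¹ ≤ (aInf κ - z)⁻¹ ∧ 0 < (l - z)⁻¹ := by
  filter_upwards [ae_mem_Icc hc] with l hl
  have h1 : 0 < aInf κ - z := by linarith
  have h2 : 0 < l - z := by linarith [hl.1]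
  refine ⟨?_, ?_, by positivity⟩
  · gcongr; exact hl.2
  · gcongr; exact hl.1

theorem integrable_pow {κ : Measure ℝ} [IsProbabilityMeasure κ] (hc : HasCompactSupp κ) {z : ℝ}
    (hz : z < aInf κ) (k : ℕ) : Integrable (fun l => ((l - z)⁻¹) ^ k) κ := by
  refine Integrable.of_bound (by fun_prop) (((aInf κ - z)⁻¹) ^ k) ?_
  filter_upwards [ae_inv_bounds hc hz] with l hl
  rw [Real.norm_eq_abs, abs_of_pos (pow_pos hl.2.2 k)]
  exact pow_le_pow_left₀ hl.2.2.le hl.2.1 k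

theorem mom_le {κ : Measure ℝ} [IsProbabilityMeasure κ] (hc : HasCompactSupp κ) {z : ℝ}
    (hz : z < aInf κ) (k : ℕ) : mom κ z k ≤ ((aInf κ - z)⁻¹) ^ k := by
  have h : mom κ z k ≤ ∫ _, ((aInf κ - z)⁻¹) ^ k ∂κ := by
    refine integral_mono_ae (integrable_pow hc hz k) (integrable_const _) ?_
    filter_upwards [ae_inv_bounds hc hz] with l hl
    exact pow_le_pow_left₀ hl.2.2.le hl.2.1 k
  simpa using h

theorem le_mom {κ : Measure ℝ} [IsProbabilityMeasure κ] (hc : HasCompactSupp κ) {z : ℝ}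
    (hz : z < aInf κ) (k : ℕ) : ((bSup κ - z)⁻¹) ^ k ≤ mom κ z k := by
  have h : ∫ _, ((bSup κ - z)⁻¹) ^ k ∂κ ≤ mom κ z k := by
    refine integral_mono_ae (integrable_const _) (integrable_pow hc hz k) ?_
    filter_upwards [ae_inv_bounds hc hz] with l hl
    refine pow_le_pow_left₀ ?_ hl.1 k
    have := aInf_le_bSup hc
    exact inv_nonneg.mpr (by linarith)
  simpa using h

theorem mom_pos {κ : Measure ℝ} [IsProbabilityMeasure κ] (hc : HasCompactSupp κ) {z : ℝ}
    (hz : z < aInf κ) (k : ℕ) : 0 < mom κ z k := by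
  refine lt_of_lt_of_le ?_ (le_mom hc hz k)
  have := aInf_le_bSup hc
  have : 0 < bSup κ - z := by linarith
  positivity

theorem mom_zero {κ : Measure ℝ} [IsProbabilityMeasure κ] (z : ℝ) : mom κ z 0 = 1 := by
  simp [mom]

theorem mom_one (κ : Measure ℝ) (z : ℝ) : mom κ z 1 = Gst κ z := by
  simp [mom, Gst]

theorem mom_logconvex {κ : Measure ℝ} [IsProbabilityMeasure κ] (hc : HasCompactSupp κ) {z : ℝ}
    (hz : z < aInf κ) (k : ℕ) : mom κ z (k + 1) ^ 2 ≤ mom κ z k * mom κ z (k + 2) := by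
  have hp := mom_pos hc hz k
  -- Cauchy-Schwarz, from the nonnegativity of `∫ x ^ k * (x - t) ^ 2` at the optimal `t`.
  set t := mom κ z (k + 1) / mom κ z k with ht
  have h0 : 0 ≤ ∫ l, (((l - z)⁻¹) ^ (k + 2) - 2 * t * ((l - z)⁻¹) ^ (k + 1)
      + t ^ 2 * ((l - z)⁻¹) ^ k) ∂κ := by
    refine integral_nonneg_of_ae ?_
    filter_upwards [ae_inv_bounds hc hz] with l hl
    have : ((l - z)⁻¹) ^ (k + 2) - 2 * t * ((l - z)⁻¹) ^ (k + 1) + t ^ 2 * ((l - z)⁻¹) ^ k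
      = ((l - z)⁻¹) ^ k * ((l - z)⁻¹ - t) ^ 2 := by ring
    rw [this]
    exact mul_nonneg (pow_pos hl.2.2 k).le (sq_nonneg _)
  rw [integral_add, integral_sub, integral_const_mul, integral_const_mul] at h0
  · change 0 ≤ mom κ z (k + 2) - 2 * t * mom κ z (k + 1) + t ^ 2 * mom κ z k at h0
    have h1 : t * mom κ z k = mom κ z (k + 1) := by rw [ht]; field_simp
    nlinarith [mul_nonneg hp.le h0]
  · exact integrable_pow hc hz _
  · exact (integrable_pow hc hz _).const_mul _
  · exact (integrable_pow hc hz _).sub ((integrable_pow hc hz _).const_mul _)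
  · exact (integrable_pow hc hz _).const_mul _

/-- Geometric expansion of the Stieltjes transform to the left of the support. -/
theorem Gst_series {κ : Measure ℝ} [IsProbabilityMeasure κ] (hc : HasCompactSupp κ) {z : ℝ}
    (hz : z < aInf κ) :
    HasFPowerSeriesAt (Gst κ) (FormalMultilinearSeries.ofScalars ℝ fun n => mom κ z (n + 1)) z := by
  have hd : 0 < aInf κ - z := by linarith
  refine ⟨ENNReal.ofReal (aInf κ - z), ?_, by simpa using hz, ?_⟩
  · refine FormalMultilinearSeries.le_radius_of_bound _ (aInf κ - z)⁻¹ fun n => ?_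
    rw [FormalMultilinearSeries.ofScalars_norm, Real.norm_eq_abs,
      abs_of_pos (mom_pos hc hz _), Real.coe_toNNReal _ hd.le]
    calc mom κ z (n + 1) * (aInf κ - z) ^ n
        ≤ ((aInf κ - z)⁻¹) ^ (n + 1) * (aInf κ - z) ^ n := by gcongr; exact mom_le hc hz _
      _ = (aInf κ - z)⁻¹ := by
        rw [pow_succ, mul_right_comm, ← mul_pow, inv_mul_cancel₀ hd.ne', one_pow, one_mul]
  · intro y hy
    have hy : |y| < aInf κ - z := by
      rw [Metric.mem_eball, edist_dist, dist_zero_right, Real.norm_eq_abs] at hy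
      exact (ENNReal.ofReal_lt_ofReal_iff hd).mp hy
    have hq : |y| * (aInf κ - z)⁻¹ < 1 := by
      rw [← div_eq_mul_inv, div_lt_one hd]; exact hy
    have key := hasSum_integral_of_summable_integral_norm (μ := κ)
      (F := fun n l => ((l - z)⁻¹) ^ (n + 1) * y ^ n)
      (fun n => (integrable_pow hc hz _).mul_const _) ?_
    · have e1 : (fun n => ∫ l, ((l - z)⁻¹) ^ (n + 1) * y ^ n ∂κ) = fun n =>
          (FormalMultilinearSeries.ofScalars ℝ fun n => mom κ z (n + 1)) n fun _ => y := by
        funext n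
        rw [integral_mul_const, FormalMultilinearSeries.ofScalars_apply_eq]
        rfl
      rw [e1] at key
      convert key using 1
      unfold Gst
      refine integral_congr_ae ?_
      filter_upwards [ae_inv_bounds hc hz, ae_mem_Icc hc] with l hl hl'
      have hlz : 0 < l - z := by linarith [hl'.1]
      have hr : |(l - z)⁻¹ * y| < 1 := by
        rw [abs_mul, abs_of_pos hl.2.2, mul_comm]
        exact lt_of_le_of_lt (mul_le_mul_of_nonneg_left hl.2.1 (abs_nonneg _)) hq
      have e2 : ∀ n : ℕ, ((l - z)⁻¹) ^ (n + 1) * y ^ n = (l - z)⁻¹ * ((l - z)⁻¹ * y) ^ n := by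
        intro n; rw [mul_pow]; ring
      simp_rw [e2]
      rw [tsum_mul_left, tsum_geometric_of_abs_lt_one hr, ← mul_inv]
      congr 1
      field_simp
      ring
    · refine Summable.of_nonneg_of_le (fun n => integral_nonneg fun l => norm_nonneg _)
        (fun n => ?_) ((summable_geometric_of_lt_one (by positivity) hq).mul_left (aInf κ - z)⁻¹)
      have h : ∫ l, ‖((l - z)⁻¹) ^ (n + 1) * y ^ n‖ ∂κ ≤
          ∫ _, (aInf κ - z)⁻¹ * (|y| * (aInf κ - z)⁻¹) ^ n ∂κ := by
        refine integral_mono_ae ((integrable_pow hc hz _).mul_const _).norm (integrable_const _) ?_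
        filter_upwards [ae_inv_bounds hc hz] with l hl
        rw [norm_mul, Real.norm_eq_abs, Real.norm_eq_abs, abs_of_pos (pow_pos hl.2.2 _), abs_pow,
          mul_pow, mul_left_comm, mul_comm (|y| ^ n), mul_comm, mul_comm (|y| ^ n), ← pow_succ']
        exact mul_le_mul_of_nonneg_right (pow_le_pow_left₀ hl.2.2.le hl.2.1 _) (by positivity)
      simpa using h

theorem Gst_analytic {κ : Measure ℝ} [IsProbabilityMeasure κ] (hc : HasCompactSupp κ) {z : ℝ}
    (hz : z < aInf κ) : AnalyticAt ℝ (Gst κ) z := (Gst_series hc hz).analyticAt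

theorem tc_Gst {κ : Measure ℝ} [IsProbabilityMeasure κ] (hc : HasCompactSupp κ) {z : ℝ}
    (hz : z < aInf κ) (n : ℕ) : tc (Gst κ) z n = mom κ z (n + 1) := by
  rw [tc_eq_coeff (Gst_series hc hz), FormalMultilinearSeries.coeff_ofScalars]

theorem deriv_Gst {κ : Measure ℝ} [IsProbabilityMeasure κ] (hc : HasCompactSupp κ) {z : ℝ}
    (hz : z < aInf κ) : deriv (Gst κ) z = mom κ z 2 := by
  rw [← tc_one, tc_Gst hc hz]

/-- Pringsheim-type principle: the Stieltjes transform does not continue analytically from the left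
through the left edge of the support. Such a continuation would bound its Taylor coefficients, the
moments of `(λ - z)⁻¹`, by `C * r⁻ⁿ` with `r` larger than the distance from `z` to part of the
mass. -/
theorem no_extension {κ : Measure ℝ} [IsProbabilityMeasure κ] (hc : HasCompactSupp κ) {f : ℝ → ℝ}
    (hf : AnalyticAt ℝ f (aInf κ))
    (h : ∀ᶠ z in nhdsWithin (aInf κ) (Iio (aInf κ)), Gst κ z = f z) : False := by
  set a := aInf κ with ha
  obtain ⟨r, hr0, hr⟩ := tc_bound_near hf
  have hr0' : (0 : ℝ) < r := hr0
  obtain ⟨l, hl, hsub⟩ := mem_nhdsLT_iff_exists_Ioo_subset.mp h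
  have hl : l < a := hl
  have e1 : ∀ᶠ z in nhdsWithin a (Iio a), max l (a - r / 2) < z :=
    nhdsWithin_le_nhds (Ioi_mem_nhds (max_lt hl (by linarith)))
  obtain ⟨z, ⟨⟨-, C, hC⟩, hz1⟩, hz⟩ :=
    (((hr.filter_mono nhdsWithin_le_nhds).and e1).and self_mem_nhdsWithin).exists
  have hz : z < a := hz
  have hlz : l < z := (le_max_left _ _).trans_lt hz1
  have hrz : a - r / 2 < z := (le_max_right _ _).trans_lt hz1
  have htc : ∀ n, tc f z n = mom κ z (n + 1) := fun n => by
    rw [← tc_Gst hc hz]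
    refine (tc_congr ?_ n).symm
    filter_upwards [Ioo_mem_nhds hlz hz] with x hx using hsub hx
  set q := a + r / 4 - z with hq
  have hq0 : 0 < q := by linarith
  have hqr : q < r := by linarith
  have hp : 0 < κ.real (Iio (a + r / 4)) := by
    rw [measureReal_def]
    exact ENNReal.toReal_pos (mass_left (by rw [← ha]; linarith)).ne' (measure_ne_top _ _)
  set p := κ.real (Iio (a + r / 4)) with hpdef
  have hlow : ∀ k, (q⁻¹) ^ k * p ≤ mom κ z k := fun k => by
    refine le_trans ?_ (mul_meas_ge_le_integral_of_nonneg (μ := κ) ?_ (integrable_pow hc hz k)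
      ((q⁻¹) ^ k))
    · gcongr
      rw [hpdef, measureReal_def, measureReal_def]
      refine ENNReal.toReal_mono (measure_ne_top _ _) (measure_mono_ae ?_)
      filter_upwards [ae_mem_Icc hc] with x hx hxr
      have hxr : x < a + r / 4 := hxr
      have : 0 < x - z := by linarith [hx.1]
      change (q⁻¹) ^ k ≤ ((x - z)⁻¹) ^ k
      gcongr
      linarith
    · filter_upwards [ae_inv_bounds hc hz] with x hx using (pow_pos hx.2.2 k).le
  obtain ⟨n, hn⟩ := pow_unbounded_of_one_lt (C * q / p) (show 1 < r / q by rwa [one_lt_div hq0])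
  have h1 := hC n
  rw [htc, abs_of_pos (mom_pos hc hz _)] at h1
  have h2 : (q⁻¹) ^ (n + 1) * p * (r : ℝ) ^ n ≤ C :=
    le_trans (by gcongr; exact hlow _) h1
  have h3 : (q⁻¹) ^ (n + 1) * p * (r : ℝ) ^ n = (r / q) ^ n * p / q := by
    rw [div_pow, pow_succ, inv_pow]; field_simp
  rw [h3, div_le_iff₀ hq0] at h2
  rw [div_lt_iff₀ hp] at hn
  linarith

/-- A measure whose transform, read along an analytic curve reaching the left edge of the support
with positive speed, agrees with an analytic function cannot exist. -/
theorem no_extension_curve {κ : Measure ℝ} [IsProbabilityMeasure κ] (hc : HasCompactSupp κ)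
    {w g : ℝ → ℝ} {z₀ : ℝ} (hw : AnalyticAt ℝ w z₀) (hw0 : w z₀ = aInf κ) (hd : 0 < deriv w z₀)
    (hg : AnalyticAt ℝ g z₀)
    (h : ∀ᶠ z in nhdsWithin z₀ (Iio z₀), Gst κ (w z) = g z) : False := by
  obtain ⟨φ, h1, h2, h3, h4⟩ := exists_local_inverse hw hd
  rw [hw0] at h1 h2 h3 h4
  have ht := tendsto_left_of_deriv_pos h1 h4
  rw [h2] at ht
  refine no_extension hc (f := fun x => g (φ x)) ?_ ?_
  · exact AnalyticAt.fun_comp (by rwa [h2]) h1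
  · filter_upwards [ht.eventually h, h3.filter_mono nhdsWithin_le_nhds] with x hx hx'
    rw [← hx, hx']

/-! ### Monotonicity and inversion of the Stieltjes transform -/

theorem Gst_pos {κ : Measure ℝ} [IsProbabilityMeasure κ] (hc : HasCompactSupp κ) {z : ℝ}
    (hz : z < aInf κ) : 0 < Gst κ z := by
  rw [← mom_one]; exact mom_pos hc hz 1

theorem Gst_strictMono {κ : Measure ℝ} [IsProbabilityMeasure κ] (hc : HasCompactSupp κ) :
    StrictMonoOn (Gst κ) (Iio (aInf κ)) := by
  refine strictMonoOn_of_deriv_pos (convex_Iio _)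
    (fun z hz => (Gst_analytic hc hz).continuousAt.continuousWithinAt) fun z hz => ?_
  rw [interior_Iio] at hz
  rw [deriv_Gst hc hz]
  exact mom_pos hc hz 2

theorem Gst_nonpos {κ : Measure ℝ} [IsProbabilityMeasure κ] (hc : HasCompactSupp κ) {z : ℝ}
    (hz : bSup κ < z) : Gst κ z ≤ 0 := by
  refine integral_nonpos_of_ae ?_
  filter_upwards [ae_mem_Icc hc] with l hl
  exact inv_nonpos.mpr (by linarith [hl.2])

theorem neg_mem_Dhat {κ : Measure ℝ} [IsProbabilityMeasure κ] (hc : HasCompactSupp κ) {g : ℝ}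
    (hg : 0 < g) : -g ∈ Dhat κ ↔ ∃ z < aInf κ, g < Gst κ z := by
  have h1 : -(GaSup κ) < ((-g : ℝ) : EReal) ↔ ∃ z < aInf κ, g < Gst κ z := by
    rw [EReal.coe_neg, EReal.neg_lt_neg_iff, GaSup, lt_sSup_iff]
    simp
  have h2 : ((-g : ℝ) : EReal) < -(GbInf κ) := by
    rw [EReal.coe_neg, EReal.neg_lt_neg_iff]
    have : GbInf κ ≤ ((Gst κ (bSup κ + 1) : ℝ) : EReal) :=
      sInf_le ⟨bSup κ + 1, by simp, rfl⟩
    refine this.trans_lt (EReal.coe_lt_coe_iff.mpr ?_)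
    exact (Gst_nonpos hc (by linarith)).trans_lt hg
  exact ⟨fun h => h1.mp h.1, fun h => ⟨h1.mpr h, h2⟩⟩

theorem Ginv_spec {κ : Measure ℝ} [IsProbabilityMeasure κ] (hc : HasCompactSupp κ) {g : ℝ}
    (hg : 0 < g) (h : ∃ z < aInf κ, g < Gst κ z) :
    Ginv κ g < aInf κ ∧ Gst κ (Ginv κ g) = g := by
  obtain ⟨z, hz, hgz⟩ := h
  have hlow : Gst κ (aInf κ - 2 / g) < g := by
    have hlt : aInf κ - 2 / g < aInf κ := by
      have : 0 < 2 / g := by positivity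
      linarith
    have := mom_le hc hlt 1
    rw [mom_one, pow_one, sub_sub_cancel, inv_div] at this
    linarith
  have hz' : aInf κ - 2 / g < z := by
    by_contra hcon
    have hlt : aInf κ - 2 / g < aInf κ := by
      have : 0 < 2 / g := by positivity
      linarith
    have := (Gst_strictMono hc).monotoneOn (show z ∈ Iio _ from hz) hlt (not_lt.mp hcon)
    linarith
  have hcont : ContinuousOn (Gst κ) (Icc (aInf κ - 2 / g) z) := fun x hx =>
    (Gst_analytic hc (lt_of_le_of_lt hx.2 hz)).continuousAt.continuousWithinAt
  obtain ⟨x, hx, hxg⟩ := intermediate_value_Icc hz'.le hcont ⟨hlow.le, hgz.le⟩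
  have hex : ∃ x ∈ Iio (aInf κ) ∪ Ioi (bSup κ), Gst κ x = g :=
    ⟨x, Or.inl (lt_of_le_of_lt hx.2 hz), hxg⟩
  have hG : Gst κ (Ginv κ g) = g := Function.invFunOn_eq hex
  refine ⟨?_, hG⟩
  rcases Function.invFunOn_mem hex with h1 | h1
  · exact h1
  · have h3 : Gst κ (Ginv κ g) ≤ 0 := Gst_nonpos hc h1
    rw [hG] at h3
    exact absurd hg (not_lt.mpr h3)

theorem Ginv_Gst {κ : Measure ℝ} [IsProbabilityMeasure κ] (hc : HasCompactSupp κ) {z : ℝ}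
    (hz : z < aInf κ) : Ginv κ (Gst κ z) = z := by
  obtain ⟨z', hz', hz''⟩ := exists_between hz
  have h := Ginv_spec hc (Gst_pos hc hz) ⟨z', hz'', Gst_strictMono hc hz hz'' hz'⟩
  exact (Gst_strictMono hc).injOn h.1 hz h.2

theorem Ginv_analytic {κ : Measure ℝ} [IsProbabilityMeasure κ] (hc : HasCompactSupp κ) {g : ℝ}
    (hg : 0 < g) (h : ∃ z < aInf κ, g < Gst κ z) : AnalyticAt ℝ (Ginv κ) g := by
  have hs := Ginv_spec hc hg h
  refine analyticAt_of_injOn isOpen_Iio (Gst_strictMono hc).injOn (Gst_analytic hc hs.1) ?_ ?_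
  · rw [deriv_Gst hc hs.1]; exact mom_pos hc hs.1 2
  · obtain ⟨z, hz, hgz⟩ := h
    filter_upwards [Ioo_mem_nhds hg hgz] with t ht
    exact Ginv_spec hc ht.1 ⟨z, hz, ht.2⟩

/-! ### Absolute monotonicity of the reciprocal transform -/

/-- Kaluza's theorem: the reciprocal of a power series with positive log-convex coefficients has
nonpositive coefficients in positive degree. -/
theorem kaluza {m c : ℕ → ℝ} (hm : ∀ n, 0 < m n) (hlc : ∀ n, m (n + 1) ^ 2 ≤ m n * m (n + 2))
    (h0 : m 0 * c 0 = 1)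
    (hrec : ∀ n, 1 ≤ n → ∑ i ∈ Finset.range (n + 1), c i * m (n - i) = 0) :
    ∀ n, 1 ≤ n → c n ≤ 0 := by
  have hratio : ∀ n k, k ≤ n → m (k + 1) * m n ≤ m k * m (n + 1) := by
    intro n k hk
    induction n, hk using Nat.le_induction with
    | base => exact (mul_comm _ _).le
    | succ n hn ih =>
      have h1 := hlc n
      have h2 := hm n
      have h3 := hm (n + 1)
      have h4 : m (k + 1) * m n * m (n + 1) ≤ m k * (m n * m (n + 2)) := by
        nlinarith [mul_le_mul_of_nonneg_left h1 (hm k).le, mul_le_mul_of_nonneg_right ih h3.le]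
      have h5 : m n * (m (k + 1) * m (n + 1)) ≤ m n * (m k * m (n + 2)) := by linarith
      exact le_of_mul_le_mul_left h5 h2
  have hc0 : 0 < c 0 := by
    have := hm 0
    by_contra hcon
    nlinarith [mul_nonneg this.le (neg_nonneg.mpr (not_lt.mp hcon))]
  intro n
  induction n using Nat.strong_induction_on with
  | _ n ih =>
    intro hn
    obtain ⟨k, rfl⟩ := Nat.exists_eq_add_of_le' hn
    have hr := hrec (k + 1) hn
    rw [Finset.sum_range_succ, Finset.sum_range_succ', Nat.sub_self] at hr
    simp only [Nat.sub_zero] at hr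
    -- Subtracting a multiple of the recursion of order `k` leaves terms of one sign.
    have hkey : 0 ≤ ∑ i ∈ Finset.range k, c (i + 1) * m (k + 1 - (i + 1)) + c 0 * m (k + 1) := by
      rcases Nat.eq_zero_or_pos k with rfl | hk
      · simpa using (mul_pos hc0 (hm 1)).le
      have hr' := hrec k hk
      rw [Finset.sum_range_succ'] at hr'
      simp only [Nat.sub_zero] at hr'
      have hmk := hm k
      refine nonneg_of_mul_nonneg_right (a := m k) ?_ hmk
      have : m k * (∑ i ∈ Finset.range k, c (i + 1) * m (k + 1 - (i + 1)) + c 0 * m (k + 1))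
          = ∑ i ∈ Finset.range k,
            c (i + 1) * (m (k + 1 - (i + 1)) * m k - m (k - (i + 1)) * m (k + 1)) := by
        have e : ∑ i ∈ Finset.range k,
            c (i + 1) * (m (k + 1 - (i + 1)) * m k - m (k - (i + 1)) * m (k + 1))
            = m k * ∑ i ∈ Finset.range k, c (i + 1) * m (k + 1 - (i + 1))
              - m (k + 1) * ∑ i ∈ Finset.range k, c (i + 1) * m (k - (i + 1)) := by
          rw [Finset.mul_sum, Finset.mul_sum, ← Finset.sum_sub_distrib]
          exact Finset.sum_congr rfl fun i _ => by ring
        rw [e]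
        linear_combination (m (k + 1)) * hr'
      rw [this]
      refine Finset.sum_nonneg fun i hi => ?_
      have hi : i < k := Finset.mem_range.mp hi
      refine mul_nonneg_of_nonpos_of_nonpos (ih (i + 1) (by omega) (by omega)) ?_
      have := hratio k (k - (i + 1)) (by omega)
      rw [show k - (i + 1) + 1 = k + 1 - (i + 1) by omega] at this
      linarith
    have h3 : c (k + 1) * m 0 ≤ 0 := by linarith
    by_contra hcon
    linarith [mul_pos (not_le.mp hcon) (hm 0)]

/-- `H_κ(z) = -1 / G_κ(z) - z`, an absolutely monotone function to the left of the support of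
`κ`. -/
noncomputable def Hrec (κ : Measure ℝ) (z : ℝ) : ℝ := -(Gst κ z)⁻¹ + -z

theorem inv_Gst_analytic {κ : Measure ℝ} [IsProbabilityMeasure κ] (hc : HasCompactSupp κ) {z : ℝ}
    (hz : z < aInf κ) : AnalyticAt ℝ (fun x => (Gst κ x)⁻¹) z :=
  (Gst_analytic hc hz).inv (Gst_pos hc hz).ne'

theorem Hrec_analytic {κ : Measure ℝ} [IsProbabilityMeasure κ] (hc : HasCompactSupp κ) {z : ℝ}
    (hz : z < aInf κ) : AnalyticAt ℝ (Hrec κ) z :=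
  (inv_Gst_analytic hc hz).neg.add analyticAt_id.neg

theorem tc_one_Hrec {κ : Measure ℝ} [IsProbabilityMeasure κ] (hc : HasCompactSupp κ) {z : ℝ}
    (hz : z < aInf κ) : tc (Hrec κ) z 1 = mom κ z 2 / Gst κ z ^ 2 - 1 := by
  have h1 : HasDerivAt (Gst κ) (mom κ z 2) z := by
    rw [← deriv_Gst hc hz]; exact (Gst_analytic hc hz).differentiableAt.hasDerivAt
  have h2 := ((h1.fun_inv (Gst_pos hc hz).ne').fun_neg).fun_add (hasDerivAt_id' z).fun_neg
  rw [tc_one, show Hrec κ = fun z => -(Gst κ z)⁻¹ + -z from rfl, h2.deriv]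
  ring

theorem tc_Hrec_nonneg {κ : Measure ℝ} [IsProbabilityMeasure κ] (hc : HasCompactSupp κ) {z : ℝ}
    (hz : z < aInf κ) {n : ℕ} (hn : 1 ≤ n) : 0 ≤ tc (Hrec κ) z n := by
  have hpos := Gst_pos hc hz
  rcases hn.eq_or_lt with rfl | hn2
  · rw [tc_one_Hrec hc hz, sub_nonneg, one_le_div (by positivity)]
    have := mom_logconvex hc hz 0
    rw [mom_zero, zero_add, mom_one, one_mul] at this
    exact this
  have hi := inv_Gst_analytic hc hz
  have hk : tc (fun x => (Gst κ x)⁻¹) z n ≤ 0 := by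
    refine kaluza (m := fun n => mom κ z (n + 1)) (fun n => mom_pos hc hz _)
      (fun n => mom_logconvex hc hz _) ?_ ?_ n hn
    · rw [tc_zero, zero_add, mom_one]
      exact mul_inv_cancel₀ hpos.ne'
    · intro k hk
      have h := tc_mul hi (Gst_analytic hc hz) k
      simp only [tc_Gst hc hz] at h
      rw [← h]
      have hone : (fun x => (Gst κ x)⁻¹ * Gst κ x) =ᶠ[nhds z] fun _ => (1 : ℝ) := by
        filter_upwards [Iio_mem_nhds hz] with x hx
        exact inv_mul_cancel₀ (Gst_pos hc hx).ne'
      rw [tc_congr hone]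
      simp [tc, iteratedDeriv_const, show k ≠ 0 by omega]
  have h := tc_add hi.neg (analyticAt_id (𝕜 := ℝ) (z := z)).neg n
  have h' : tc (Hrec κ) z n = - tc (fun x => (Gst κ x)⁻¹) z n + - tc (fun x => x) z n := by
    rw [← tc_neg, ← tc_neg]
    exact h
  rw [h', tc_id z hn2]
  linarith

/-! ### The function `F̂` and its domain -/

section Pair

variable {μ ν : Measure ℝ} [IsProbabilityMeasure μ] [IsProbabilityMeasure ν]

theorem mem_FhatDom (hcμ : HasCompactSupp μ) (hcν : HasCompactSupp ν) {h : ℝ} :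
    h ∈ FhatDom μ ν ↔ h < aInf ν ∧ ∃ x < aInf μ, Gst ν h < Gst μ x :=
  and_congr_right fun hh => neg_mem_Dhat hcμ (Gst_pos hcν hh)

theorem FhatDom_lower (hcμ : HasCompactSupp μ) (hcν : HasCompactSupp ν) {h h' : ℝ}
    (hh : h ∈ FhatDom μ ν) (hle : h' ≤ h) : h' ∈ FhatDom μ ν := by
  rw [mem_FhatDom hcμ hcν] at hh ⊢
  obtain ⟨h1, x, hx, hx'⟩ := hh
  have h2 : h' < aInf ν := hle.trans_lt h1
  exact ⟨h2, x, hx, ((Gst_strictMono hcν).monotoneOn h2 h1 hle).trans_lt hx'⟩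

theorem FhatDom_nhds (hcμ : HasCompactSupp μ) (hcν : HasCompactSupp ν) {h : ℝ}
    (hh : h ∈ FhatDom μ ν) : FhatDom μ ν ∈ nhds h := by
  rw [mem_FhatDom hcμ hcν] at hh
  obtain ⟨h1, x, hx, hx'⟩ := hh
  filter_upwards [Iio_mem_nhds h1,
    (Gst_analytic hcν h1).continuousAt.eventually (gt_mem_nhds hx')] with t ht ht'
  exact (mem_FhatDom hcμ hcν).mpr ⟨ht, x, hx, ht'⟩

/-- The companion point of `h`: the `w` to the left of `supp μ` with `G_μ(w) = G_ν(h)`. -/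
noncomputable def comp (μ ν : Measure ℝ) (h : ℝ) : ℝ := Ginv μ (Gst ν h)

theorem comp_spec (hcμ : HasCompactSupp μ) (hcν : HasCompactSupp ν) {h : ℝ}
    (hh : h ∈ FhatDom μ ν) : comp μ ν h < aInf μ ∧ Gst μ (comp μ ν h) = Gst ν h := by
  rw [mem_FhatDom hcμ hcν] at hh
  exact Ginv_spec hcμ (Gst_pos hcν hh.1) hh.2

theorem comp_analytic (hcμ : HasCompactSupp μ) (hcν : HasCompactSupp ν) {h : ℝ}
    (hh : h ∈ FhatDom μ ν) : AnalyticAt ℝ (comp μ ν) h := by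
  rw [mem_FhatDom hcμ hcν] at hh
  have h1 := (Ginv_analytic hcμ (Gst_pos hcν hh.1) hh.2).comp (f := Gst ν) (Gst_analytic hcν hh.1)
  exact h1

omit [IsProbabilityMeasure μ] [IsProbabilityMeasure ν] in
theorem Fhat_eq (h : ℝ) : Fhat μ ν h = comp μ ν h + (Gst ν h)⁻¹ + h := by
  simp [Fhat, Rhat, comp]

theorem Fhat_analytic (hcμ : HasCompactSupp μ) (hcν : HasCompactSupp ν) {h : ℝ}
    (hh : h ∈ FhatDom μ ν) : AnalyticAt ℝ (Fhat μ ν) h := by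
  have h1 : Fhat μ ν = fun h => comp μ ν h + (Gst ν h)⁻¹ + h := funext Fhat_eq
  rw [h1]
  exact ((comp_analytic hcμ hcν hh).add (inv_Gst_analytic hcν hh.1)).add analyticAt_id

theorem deriv_Fhat (hcμ : HasCompactSupp μ) (hcν : HasCompactSupp ν) {h : ℝ}
    (hh : h ∈ FhatDom μ ν) :
    deriv (Fhat μ ν) h =
      mom ν h 2 / mom μ (comp μ ν h) 2 - mom ν h 2 / Gst ν h ^ 2 + 1 := by
  have hs := comp_spec hcμ hcν hh
  have hν : HasDerivAt (Gst ν) (mom ν h 2) h := by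
    rw [← deriv_Gst hcν hh.1]; exact (Gst_analytic hcν hh.1).differentiableAt.hasDerivAt
  have hμ : HasDerivAt (Gst μ) (mom μ (comp μ ν h) 2) (comp μ ν h) := by
    rw [← deriv_Gst hcμ hs.1]; exact (Gst_analytic hcμ hs.1).differentiableAt.hasDerivAt
  have hw := (comp_analytic hcμ hcν hh).differentiableAt.hasDerivAt
  have hcomp := hμ.comp h hw
  have heq : Gst μ ∘ comp μ ν =ᶠ[nhds h] Gst ν := by
    filter_upwards [FhatDom_nhds hcμ hcν hh] with t ht using (comp_spec hcμ hcν ht).2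
  have hd := (hcomp.congr_of_eventuallyEq heq.symm).unique hν
  have hF := (hw.fun_add (hν.fun_inv (Gst_pos hcν hh.1).ne')).fun_add (hasDerivAt_id' h)
  rw [show Fhat μ ν = fun h => comp μ ν h + (Gst ν h)⁻¹ + h from funext Fhat_eq, hF.deriv, ← hd]
  have := (mom_pos hcμ hs.1 2).ne'
  field_simp
  ring

omit [IsProbabilityMeasure ν] in
theorem ratio_lt_two (hcμ : HasCompactSupp μ) {z : ℝ} (hz : z < aInf μ)
    (hz' : 3 * (bSup μ - aInf μ) ≤ aInf μ - z) : mom μ z 2 < 2 * Gst μ z ^ 2 := by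
  have hab := aInf_le_bSup hcμ
  have h1 := mom_le hcμ hz 2
  have h2 := le_mom hcμ hz 1
  rw [mom_one, pow_one] at h2
  have ha : 0 < aInf μ - z := by linarith
  have h3 : (3 / 4) * (aInf μ - z)⁻¹ ≤ (bSup μ - z)⁻¹ := by
    have : (3 / 4) * (aInf μ - z)⁻¹ = ((4 / 3) * (aInf μ - z))⁻¹ := by
      rw [mul_inv]; norm_num
    rw [this]
    gcongr
    · linarith
    · linarith
  have hinv : 0 < (aInf μ - z)⁻¹ := by positivity
  nlinarith

theorem comp_le (hcμ : HasCompactSupp μ) (hcν : HasCompactSupp ν) {h : ℝ}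
    (hh : h ∈ FhatDom μ ν) : comp μ ν h ≤ bSup μ - aInf ν + h := by
  have hs := comp_spec hcμ hcν hh
  have h1 := le_mom hcμ hs.1 1
  have h2 := mom_le hcν hh.1 1
  rw [mom_one, pow_one] at h1 h2
  rw [hs.2] at h1
  have hb : 0 < bSup μ - comp μ ν h := by linarith [aInf_le_bSup hcμ, hs.1]
  have ha : 0 < aInf ν - h := by linarith [hh.1]
  have := (inv_le_inv₀ hb ha).mp (h1.trans h2)
  linarith

theorem Fhat_le (hcμ : HasCompactSupp μ) (hcν : HasCompactSupp ν) {h : ℝ}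
    (hh : h ∈ FhatDom μ ν) : Fhat μ ν h ≤ bSup μ + bSup ν - aInf ν + h := by
  have h1 := comp_le hcμ hcν hh
  have h2 := le_mom hcν hh.1 1
  rw [mom_one, pow_one] at h2
  have hb : 0 < bSup ν - h := by linarith [aInf_le_bSup hcν, hh.1]
  have h3 := inv_anti₀ (by positivity) h2
  rw [inv_inv] at h3
  rw [Fhat_eq]
  linarith

theorem near_bot (hcμ : HasCompactSupp μ) (hcν : HasCompactSupp ν) :
    ∃ h₀, ∀ h ≤ h₀, h ∈ FhatDom μ ν ∧ 0 < deriv (Fhat μ ν) h := by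
  have hμ1 : aInf μ - 1 < aInf μ := by linarith
  have hμ2 : aInf μ - 2 < aInf μ := by linarith
  set c := Gst μ (aInf μ - 2) with hc
  have hc0 : 0 < c := Gst_pos hcμ hμ2
  have hdom : ∀ h ≤ aInf ν - c⁻¹, h ∈ FhatDom μ ν := fun h hle => by
    have hci : 0 < c⁻¹ := by positivity
    have hlt : h < aInf ν := by linarith
    refine (mem_FhatDom hcμ hcν).mpr ⟨hlt, aInf μ - 1, hμ1, ?_⟩
    have h2 := mom_le hcν hlt 1
    rw [mom_one, pow_one] at h2
    have h3 : (aInf ν - h)⁻¹ ≤ c := inv_le_of_inv_le₀ hc0 (by linarith)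
    have h4 : c < Gst μ (aInf μ - 1) :=
      Gst_strictMono hcμ hμ2 hμ1 (by linarith)
    linarith
  refine ⟨min (aInf ν - c⁻¹) (min (aInf ν - 3 * (bSup ν - aInf ν))
    (aInf μ - 3 * (bSup μ - aInf μ) - bSup μ + aInf ν)), fun h hle => ?_⟩
  have hh := hdom h (hle.trans (min_le_left _ _))
  refine ⟨hh, ?_⟩
  have e1 : h ≤ aInf ν - 3 * (bSup ν - aInf ν) :=
    hle.trans ((min_le_right _ _).trans (min_le_left _ _))
  have e2 : h ≤ aInf μ - 3 * (bSup μ - aInf μ) - bSup μ + aInf ν :=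
    hle.trans ((min_le_right _ _).trans (min_le_right _ _))
  have hs := comp_spec hcμ hcν hh
  have r1 := ratio_lt_two hcν hh.1 (by linarith)
  have r2 := ratio_lt_two hcμ hs.1 (by linarith [comp_le hcμ hcν hh])
  rw [hs.2] at r2
  have p1 := mom_pos hcμ hs.1 2
  have p2 := mom_pos hcν hh.1 2
  have p3 := Gst_pos hcν hh.1
  have c1 := mom_logconvex hcν hh.1 0
  rw [mom_zero, zero_add, mom_one, one_mul] at c1
  rw [deriv_Fhat hcμ hcν hh]
  set A := mom ν h 2
  set B := mom μ (comp μ ν h) 2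
  set g := Gst ν h
  have hg2 : 0 < g ^ 2 := by positivity
  -- With `α = A / g²` and `β = B / g²`, the derivative is `(1 - (α - 1) (β - 1)) / β`.
  have e : A / B - A / g ^ 2 + 1 = (A * g ^ 2 + B * g ^ 2 - A * B) / (B * g ^ 2) := by
    field_simp
    ring
  rw [e]
  refine div_pos ?_ (by positivity)
  have c1 : g ^ 2 ≤ A := c1
  nlinarith [mul_nonneg (sub_nonneg.mpr c1) (sub_nonneg.mpr r2.le), mul_pos hg2 (sub_pos.mpr r1)]

/-! ### The interval to the left of `h*` -/

omit [IsProbabilityMeasure μ] [IsProbabilityMeasure ν] in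
theorem Hhat_bdd : BddAbove (Hhat μ ν) := ⟨aInf ν, fun _ hh => hh.1.1.le⟩

theorem near_bot_lt_hstar (hcμ : HasCompactSupp μ) (hcν : HasCompactSupp ν) :
    ∃ h₀, h₀ < hstar μ ν ∧ h₀ ∈ FhatDom μ ν := by
  obtain ⟨h₀, h⟩ := near_bot hcμ hcν
  have : h₀ ∈ Hhat μ ν := ⟨(h h₀ le_rfl).1, fun t _ ht => (h t ht.le).2⟩
  exact ⟨h₀ - 1, lt_of_lt_of_le (by linarith) (le_csSup Hhat_bdd this),
    (h (h₀ - 1) (by linarith)).1⟩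

theorem of_lt_hstar (hcμ : HasCompactSupp μ) (hcν : HasCompactSupp ν) {h : ℝ}
    (hh : h < hstar μ ν) : h ∈ FhatDom μ ν ∧ 0 < deriv (Fhat μ ν) h := by
  have hne : (Hhat μ ν).Nonempty := by
    obtain ⟨h₀, h⟩ := near_bot hcμ hcν
    exact ⟨h₀, (h h₀ le_rfl).1, fun t _ ht => (h t ht.le).2⟩
  obtain ⟨h', h1, h2⟩ := exists_lt_of_lt_csSup hne hh
  have hd := FhatDom_lower hcμ hcν h1.1 h2.le
  exact ⟨hd, h1.2 h hd h2⟩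

theorem hstar_le (hcμ : HasCompactSupp μ) (hcν : HasCompactSupp ν) : hstar μ ν ≤ aInf ν :=
  le_of_forall_lt fun _ hh => (of_lt_hstar hcμ hcν hh).1.1

theorem hstar_not_regular (hcμ : HasCompactSupp μ) (hcν : HasCompactSupp ν)
    (hdom : hstar μ ν ∈ FhatDom μ ν) : ¬ 0 < deriv (Fhat μ ν) (hstar μ ν) := by
  intro hd
  have hcont := (Fhat_analytic hcμ hcν hdom).deriv.continuousAt
  obtain ⟨ε, hε, hsub⟩ := Metric.eventually_nhds_iff_ball.mp
    ((hcont.eventually (lt_mem_nhds hd)).and (FhatDom_nhds hcμ hcν hdom))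
  have hmem : hstar μ ν + ε / 2 ∈ Hhat μ ν := by
    refine ⟨(hsub _ ?_).2, fun t ht htl => ?_⟩
    · rw [Metric.mem_ball, Real.dist_eq, add_sub_cancel_left, abs_of_pos (by linarith)]
      linarith
    · rcases lt_or_ge t (hstar μ ν) with h1 | h1
      · exact (of_lt_hstar hcμ hcν h1).2
      · refine (hsub t ?_).1
        rw [Metric.mem_ball, Real.dist_eq, abs_of_nonneg (by linarith)]
        linarith
  have := le_csSup Hhat_bdd hmem
  change _ ≤ hstar μ ν at this
  linarith

theorem Fhat_strictMono (hcμ : HasCompactSupp μ) (hcν : HasCompactSupp ν) :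
    StrictMonoOn (Fhat μ ν) (Iio (hstar μ ν)) := by
  refine strictMonoOn_of_deriv_pos (convex_Iio _) (fun h hh =>
    (Fhat_analytic hcμ hcν (of_lt_hstar hcμ hcν hh).1).continuousAt.continuousWithinAt) ?_
  intro h hh
  rw [interior_Iio] at hh
  exact (of_lt_hstar hcμ hcν hh).2

theorem image_lower (hcμ : HasCompactSupp μ) (hcν : HasCompactSupp ν) {y y' : ℝ}
    (hy : y ∈ Fhat μ ν '' Iio (hstar μ ν)) (hle : y' ≤ y) :
    y' ∈ Fhat μ ν '' Iio (hstar μ ν) := by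
  obtain ⟨h, hh, rfl⟩ := hy
  set h₁ := min h (y' - (bSup μ + bSup ν - aInf ν)) with hh₁
  have h1 : h₁ ≤ h := min_le_left _ _
  have h2 : Fhat μ ν h₁ ≤ y' := by
    have := Fhat_le hcμ hcν (of_lt_hstar hcμ hcν (h1.trans_lt hh)).1
    have h3 : h₁ ≤ y' - (bSup μ + bSup ν - aInf ν) := min_le_right _ _
    linarith
  have hcont : ContinuousOn (Fhat μ ν) (Icc h₁ h) := fun x hx =>
    (Fhat_analytic hcμ hcν
      (of_lt_hstar hcμ hcν (lt_of_le_of_lt hx.2 hh)).1).continuousAt.continuousWithinAt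
  obtain ⟨x, hx, hxy⟩ := intermediate_value_Icc h1 hcont ⟨h2, hle⟩
  exact ⟨x, lt_of_le_of_lt hx.2 hh, hxy⟩

theorem image_open (hcμ : HasCompactSupp μ) (hcν : HasCompactSupp ν) {y : ℝ}
    (hy : y ∈ Fhat μ ν '' Iio (hstar μ ν)) :
    ∃ y' > y, y' ∈ Fhat μ ν '' Iio (hstar μ ν) := by
  obtain ⟨h, hh, rfl⟩ := hy
  obtain ⟨h', h1, h2⟩ := exists_between (show h < hstar μ ν from hh)
  exact ⟨Fhat μ ν h', Fhat_strictMono hcμ hcν hh h2 h1, h', h2, rfl⟩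

/-- The subordination function: the inverse of the restriction of `F̂` to `(-∞, h*)`. -/
noncomputable def sub (μ ν : Measure ℝ) (z : ℝ) : ℝ :=
  Function.invFunOn (Fhat μ ν) (Iio (hstar μ ν)) z

omit [IsProbabilityMeasure μ] [IsProbabilityMeasure ν] in
theorem sub_spec {z : ℝ} (hz : z ∈ Fhat μ ν '' Iio (hstar μ ν)) :
    sub μ ν z < hstar μ ν ∧ Fhat μ ν (sub μ ν z) = z :=
  ⟨Function.invFunOn_mem hz, Function.invFunOn_eq hz⟩

theorem sub_analytic (hcμ : HasCompactSupp μ) (hcν : HasCompactSupp ν) {z : ℝ}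
    (hz : z ∈ Fhat μ ν '' Iio (hstar μ ν)) : AnalyticAt ℝ (sub μ ν) z := by
  have hs := of_lt_hstar hcμ hcν (sub_spec hz).1
  refine analyticAt_of_injOn isOpen_Iio (Fhat_strictMono hcμ hcν).injOn
    (Fhat_analytic hcμ hcν hs.1) hs.2 ?_
  obtain ⟨y', h1, h2⟩ := image_open hcμ hcν hz
  filter_upwards [Iio_mem_nhds h1] with t ht
  exact sub_spec (image_lower hcμ hcν h2 (le_of_lt ht))

theorem deriv_sub_pos (hcμ : HasCompactSupp μ) (hcν : HasCompactSupp ν) {z : ℝ}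
    (hz : z ∈ Fhat μ ν '' Iio (hstar μ ν)) : 0 < deriv (sub μ ν) z := by
  have hs := of_lt_hstar hcμ hcν (sub_spec hz).1
  have h1 := (Fhat_analytic hcμ hcν hs.1).differentiableAt.hasDerivAt.comp z
    (sub_analytic hcμ hcν hz).differentiableAt.hasDerivAt
  have heq : Fhat μ ν ∘ sub μ ν =ᶠ[nhds z] fun t => t := by
    obtain ⟨y', h1, h2⟩ := image_open hcμ hcν hz
    filter_upwards [Iio_mem_nhds h1] with t ht
    exact (sub_spec (image_lower hcμ hcν h2 (le_of_lt ht))).2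
  have h2 := (h1.congr_of_eventuallyEq heq.symm).unique (hasDerivAt_id' z)
  exact pos_of_mul_pos_right (h2 ▸ one_pos) hs.2.le

/-- A pair of functions, each equal to the identity plus an absolutely monotone function of the
other: comparing Taylor coefficients degree by degree, both are absolutely monotone. -/
theorem tc_fixed_point {f g A B : ℝ → ℝ} {z : ℝ} (hf : AnalyticAt ℝ f z) (hg : AnalyticAt ℝ g z)
    (hA : AnalyticAt ℝ A (g z)) (hB : AnalyticAt ℝ B (f z))
    (hfA : ∀ᶠ t in nhds z, f t = t + A (g t)) (hgB : ∀ᶠ t in nhds z, g t = t + B (f t))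
    (hAn : ∀ k, 1 ≤ k → 0 ≤ tc A (g z) k) (hBn : ∀ k, 1 ≤ k → 0 ≤ tc B (f z) k)
    (hf1 : 0 < tc f z 1) :
    (∀ n, 1 ≤ n → 0 ≤ tc f z n ∧ 0 ≤ tc g z n) ∧ 1 ≤ tc f z 1 ∧ 1 ≤ tc g z 1 := by
  have ef : ∀ n, tc f z n = tc (fun t => t) z n + tc (fun t => A (g t)) z n := fun n => by
    have h := tc_add (show AnalyticAt ℝ (fun t : ℝ => t) z from analyticAt_id) (hA.fun_comp hg) n
    rw [← h]
    exact tc_congr hfA n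
  have eg : ∀ n, tc g z n = tc (fun t => t) z n + tc (fun t => B (f t)) z n := fun n => by
    have h := tc_add (show AnalyticAt ℝ (fun t : ℝ => t) z from analyticAt_id) (hB.fun_comp hf) n
    rw [← h]
    exact tc_congr hgB n
  have id1 : tc (fun t : ℝ => t) z 1 = 1 := by rw [tc_one]; simp
  have cf1 := tc_comp_ge hA hg le_rfl hAn (fun k h1 h2 => absurd h2 (by omega))
  have cg1 := tc_comp_ge hB hf le_rfl hBn (fun k h1 h2 => absurd h2 (by omega))
  have ef1 := ef 1
  have eg1 := eg 1
  rw [id1] at ef1 eg1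
  have a1 := hAn 1 le_rfl
  have b1 := hBn 1 le_rfl
  set α := tc A (g z) 1
  set β := tc B (f z) 1
  have hg1 : 1 ≤ tc g z 1 := by nlinarith
  have hf1' : 1 ≤ tc f z 1 := by nlinarith
  have hdet : 0 < 1 - α * β := by
    have : 1 + α ≤ tc f z 1 * (1 - α * β) := by
      nlinarith [mul_le_mul_of_nonneg_left (show 1 + β * tc f z 1 ≤ tc g z 1 by linarith) a1]
    exact pos_of_mul_pos_right (lt_of_lt_of_le (by linarith) this) hf1.le
  refine ⟨fun n => ?_, hf1', hg1⟩
  induction n using Nat.strong_induction_on with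
  | _ n ih =>
    intro hn
    rcases hn.eq_or_lt with rfl | hn2
    · exact ⟨by linarith, by linarith⟩
    have cf := tc_comp_ge hA hg hn hAn (fun k h1 h2 => (ih k h2 h1).2)
    have cg := tc_comp_ge hB hf hn hBn (fun k h1 h2 => (ih k h2 h1).1)
    have efn := ef n
    have egn := eg n
    rw [tc_id z hn2, zero_add] at efn egn
    rw [← efn] at cf
    rw [← egn] at cg
    have hfn : 0 ≤ tc f z n := by
      have : 0 ≤ (1 - α * β) * tc f z n := by
        nlinarith [mul_le_mul_of_nonneg_left cg a1]
      exact nonneg_of_mul_nonneg_right this hdet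
    exact ⟨hfn, le_trans (mul_nonneg b1 hfn) cg⟩

theorem one_le_deriv_extension {f F : ℝ → ℝ} {z₀ : ℝ} (hF : AnalyticAt ℝ F z₀)
    (h : ∀ᶠ z in nhdsWithin z₀ (Iio z₀), f z = F z) (hd : ∀ z < z₀, 1 ≤ deriv f z) :
    1 ≤ deriv F z₀ := by
  refine ge_of_tendsto (hF.deriv.continuousAt.tendsto.mono_left
    (nhdsWithin_le_nhds (s := Iio z₀))) ?_
  obtain ⟨l, hl, hsub⟩ := mem_nhdsLT_iff_exists_Ioo_subset.mp h
  filter_upwards [Ioo_mem_nhdsLT hl] with z hz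
  have : f =ᶠ[nhds z] F := by
    filter_upwards [Ioo_mem_nhds hz.1 hz.2] with x hx using hsub hx
  rw [← this.deriv_eq]
  exact hd z hz.2

/-! ### Identification with the free convolution -/

omit [IsProbabilityMeasure μ] in
theorem free_near_bot (hcν : HasCompactSupp ν) {ρ : Measure ℝ}
    (hρ : IsFreeAdd μ ν ρ) :
    ∃ h₁ < aInf ν, ∀ h ≤ h₁, Fhat μ ν h < aInf ρ ∧ Gst ρ (Fhat μ ν h) = Gst ν h := by
  obtain ⟨hpρ, hcρ, ε, hε, H⟩ := hρ
  have h2ε : 0 < 2 / ε := by positivity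
  refine ⟨aInf ν - 2 / ε, by linarith, fun h hle => ?_⟩
  have hlt : h < aInf ν := by linarith
  have hg := Gst_pos hcν hlt
  have hgε : Gst ν h < ε := by
    have h1 := mom_le hcν hlt 1
    rw [mom_one, pow_one] at h1
    have h2 : (aInf ν - h)⁻¹ ≤ (2 / ε)⁻¹ := inv_anti₀ h2ε (by linarith)
    rw [inv_div] at h2
    linarith
  obtain ⟨d1, -, -, hR⟩ := H (-Gst ν h) ⟨by linarith, by linarith⟩ (by linarith)
  have hs := Ginv_spec hcρ hg ((neg_mem_Dhat hcρ hg).mp d1)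
  have hν := Ginv_Gst hcν hlt
  simp only [Rhat, neg_neg, inv_neg, hν] at hR
  have hF : Fhat μ ν h = Ginv ρ (Gst ν h) := by
    rw [Fhat_eq, comp]; linarith
  rw [hF]
  exact hs

/-- Where both sides make sense, the subordination identity `G_ρ(z) = G_ν(ω(z))` propagates from a
neighbourhood of `-∞` by analytic continuation. -/
theorem subordination (hcμ : HasCompactSupp μ) (hcν : HasCompactSupp ν) {ρ : Measure ℝ}
    (hρ : IsFreeAdd μ ν ρ) {z₀ : ℝ} (hz₀ : z₀ ≤ aInf ρ)
    (hJ : ∀ z < z₀, z ∈ Fhat μ ν '' Iio (hstar μ ν)) {z : ℝ} (hz : z < z₀) :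
    Gst ρ z = Gst ν (sub μ ν z) := by
  obtain ⟨h₁, -, H⟩ := free_near_bot hcν hρ
  obtain ⟨hpρ, hcρ, -⟩ := hρ
  obtain ⟨h₀, hh₀, -⟩ := near_bot_lt_hstar hcμ hcν
  set h₂ := min h₁ h₀
  have hh₂ : h₂ < hstar μ ν := (min_le_right _ _).trans_lt hh₀
  set c := min (Fhat μ ν h₂) z₀
  have hbase : ∀ t < c, Gst ρ t = Gst ν (sub μ ν t) := fun t ht => by
    have hs := sub_spec (hJ t (ht.trans_le (min_le_right _ _)))
    have hlt : sub μ ν t < h₂ := by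
      rw [← (Fhat_strictMono hcμ hcν).lt_iff_lt hs.1 hh₂, hs.2]
      exact ht.trans_le (min_le_left _ _)
    have := (H (sub μ ν t) (hlt.le.trans (min_le_left _ _))).2
    rwa [hs.2] at this
  have hc : c - 1 < c := by linarith
  refine AnalyticOnNhd.eqOn_of_preconnected_of_eventuallyEq (𝕜 := ℝ) (U := Iio z₀) (z₀ := c - 1)
    (f := Gst ρ) (g := fun t => Gst ν (sub μ ν t)) ?_ ?_ isPreconnected_Iio ?_ ?_ hz
  · exact fun t ht => Gst_analytic hcρ (lt_of_lt_of_le ht hz₀)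
  · exact fun t ht => (Gst_analytic hcν (of_lt_hstar hcμ hcν (sub_spec (hJ t ht)).1).1.1).fun_comp
      (sub_analytic hcμ hcν (hJ t ht))
  · exact hc.trans_le (min_le_right _ _)
  · filter_upwards [Iio_mem_nhds hc] with t ht using hbase t ht

theorem image_subset (hcμ : HasCompactSupp μ) (hcν : HasCompactSupp ν) {ρ : Measure ℝ}
    (hρ : IsFreeAdd μ ν ρ) {z : ℝ} (hz : z ∈ Fhat μ ν '' Iio (hstar μ ν)) : z < aInf ρ := by
  by_contra hcon
  have ha := image_lower hcμ hcν hz (not_lt.mp hcon)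
  have hs : ∀ t < aInf ρ, Gst ρ t = Gst ν (sub μ ν t) := fun t ht =>
    subordination hcμ hcν hρ le_rfl (fun s hs => image_lower hcμ hcν ha (le_of_lt hs)) ht
  obtain ⟨hpρ, hcρ, -⟩ := hρ
  refine no_extension hcρ (f := fun t => Gst ν (sub μ ν t)) ?_ ?_
  · exact (Gst_analytic hcν (of_lt_hstar hcμ hcν (sub_spec ha).1).1.1).fun_comp
      (sub_analytic hcμ hcν ha)
  · filter_upwards [self_mem_nhdsWithin] with t ht using hs t ht

/-- The image of `(-∞, h*)` under `F̂` cannot stop before the left edge of `ρ`: at a premature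
endpoint both subordination functions would continue analytically, which is excluded both at the
edges of `μ` and `ν` and at an interior critical point of `F̂`. -/
theorem not_image_Iio (hcμ : HasCompactSupp μ) (hcν : HasCompactSupp ν) {ρ : Measure ℝ}
    (hρ : IsFreeAdd μ ν ρ) {z₀ : ℝ} (hz₀ : z₀ < aInf ρ) :
    Fhat μ ν '' Iio (hstar μ ν) ≠ Iio z₀ := by
  intro hJ
  have hmem : ∀ z < z₀, z ∈ Fhat μ ν '' Iio (hstar μ ν) := fun z hz => by rw [hJ]; exact hz
  have hsub : ∀ z < z₀, Gst ρ z = Gst ν (sub μ ν z) := fun z hz =>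
    subordination hcμ hcν hρ hz₀.le hmem hz
  obtain ⟨hpρ, hcρ, -⟩ := hρ
  set ω := sub μ ν with hω
  set ωμ : ℝ → ℝ := fun z => comp μ ν (ω z) with hωμ
  have hdom : ∀ z < z₀, ω z ∈ FhatDom μ ν := fun z hz =>
    (of_lt_hstar hcμ hcν (sub_spec (hmem z hz)).1).1
  have hωa : ∀ z < z₀, AnalyticAt ℝ ω z := fun z hz => sub_analytic hcμ hcν (hmem z hz)
  have hωμa : ∀ z < z₀, AnalyticAt ℝ ωμ z := fun z hz =>
    (comp_analytic hcμ hcν (hdom z hz)).fun_comp (hωa z hz)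
  have hF : ∀ z < z₀, ωμ z + (Gst ν (ω z))⁻¹ + ω z = z := fun z hz => by
    rw [← Fhat_eq]; exact (sub_spec (hmem z hz)).2
  have hμs : ∀ z < z₀, ωμ z < aInf μ ∧ Gst μ (ωμ z) = Gst ν (ω z) := fun z hz =>
    comp_spec hcμ hcν (hdom z hz)
  have r1 : ∀ z < z₀, ω z = z + Hrec μ (ωμ z) := fun z hz => by
    rw [Hrec, (hμs z hz).2]; linarith [hF z hz]
  have r2 : ∀ z < z₀, ωμ z = z + Hrec ν (ω z) := fun z hz => by
    rw [Hrec]; linarith [hF z hz]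
  have hfix : ∀ z < z₀, (∀ n, 1 ≤ n → 0 ≤ tc ω z n ∧ 0 ≤ tc ωμ z n) ∧
      1 ≤ tc ω z 1 ∧ 1 ≤ tc ωμ z 1 := fun z hz => by
    refine tc_fixed_point (hωa z hz) (hωμa z hz) (Hrec_analytic hcμ (hμs z hz).1)
      (Hrec_analytic hcν (hdom z hz).1) ?_ ?_ (fun k hk => tc_Hrec_nonneg hcμ (hμs z hz).1 hk)
      (fun k hk => tc_Hrec_nonneg hcν (hdom z hz).1 hk) ?_
    · filter_upwards [Iio_mem_nhds hz] with t ht using r1 t ht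
    · filter_upwards [Iio_mem_nhds hz] with t ht using r2 t ht
    · rw [tc_one]; exact deriv_sub_pos hcμ hcν (hmem z hz)
  have hS : AnalyticAt ℝ (fun z => z - (Gst ρ z)⁻¹) z₀ :=
    analyticAt_id.sub (inv_Gst_analytic hcρ hz₀)
  have hsum : ∀ z < z₀, ω z + ωμ z = z - (Gst ρ z)⁻¹ := fun z hz => by
    rw [hsub z hz]; linarith [hF z hz]
  obtain ⟨Ω, hΩ, hΩe⟩ := extend_of_sum hωa hωμa hS (fun z hz n hn => ((hfix z hz).1 n hn).1)
    (fun z hz n hn => ((hfix z hz).1 n hn).2) hsum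
  obtain ⟨Ωμ, hΩμ, hΩμe⟩ := extend_of_sum hωμa hωa hS
    (fun z hz n hn => ((hfix z hz).1 n hn).2) (fun z hz n hn => ((hfix z hz).1 n hn).1)
    (fun z hz => by rw [add_comm]; exact hsum z hz)
  have hdΩ := one_le_deriv_extension hΩ hΩe fun z hz => by
    rw [← tc_one]; exact (hfix z hz).2.1
  have hdΩμ := one_le_deriv_extension hΩμ hΩμe fun z hz => by
    rw [← tc_one]; exact (hfix z hz).2.2
  have hlt : ∀ᶠ z in nhdsWithin z₀ (Iio z₀), z < z₀ := self_mem_nhdsWithin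
  have tΩ : Tendsto ω (nhdsWithin z₀ (Iio z₀)) (nhds (Ω z₀)) :=
    (hΩ.continuousAt.tendsto.mono_left nhdsWithin_le_nhds).congr' (hΩe.mono fun _ h => h.symm)
  have tΩμ : Tendsto ωμ (nhdsWithin z₀ (Iio z₀)) (nhds (Ωμ z₀)) :=
    (hΩμ.continuousAt.tendsto.mono_left nhdsWithin_le_nhds).congr' (hΩμe.mono fun _ h => h.symm)
  have tρ : Tendsto (Gst ρ) (nhdsWithin z₀ (Iio z₀)) (nhds (Gst ρ z₀)) :=
    (Gst_analytic hcρ hz₀).continuousAt.tendsto.mono_left nhdsWithin_le_nhds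
  have hΩ0 : Ω z₀ = hstar μ ν := by
    refine le_antisymm (le_of_tendsto tΩ ?_) (le_of_forall_lt_imp_le_of_dense fun h hh => ?_)
    · filter_upwards [hlt] with z hz using (sub_spec (hmem z hz)).1.le
    · have hFh : Fhat μ ν h < z₀ := by
        have : Fhat μ ν h ∈ Iio z₀ := hJ ▸ mem_image_of_mem _ hh
        exact this
      refine ge_of_tendsto tΩ ?_
      filter_upwards [Ioo_mem_nhdsLT hFh] with z hz
      have hs := sub_spec (hmem z hz.2)
      refine le_of_lt ?_
      rw [← (Fhat_strictMono hcμ hcν).lt_iff_lt hh hs.1, hs.2]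
      exact hz.1
  have hΩμ0 : Ωμ z₀ ≤ aInf μ := by
    refine le_of_tendsto tΩμ ?_
    filter_upwards [hlt] with z hz using (hμs z hz).1.le
  have hlν : hstar μ ν < aInf ν := by
    refine (hstar_le hcμ hcν).lt_of_ne fun heq => ?_
    refine no_extension_curve hcν hΩ (hΩ0.trans heq) (by linarith) (Gst_analytic hcρ hz₀) ?_
    filter_upwards [hlt, hΩe] with z hz hz'
    rw [← hz', hsub z hz]
  have hlμ : Ωμ z₀ < aInf μ := by
    refine hΩμ0.lt_of_ne fun heq => ?_
    refine no_extension_curve hcμ hΩμ heq (by linarith) (Gst_analytic hcρ hz₀) ?_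
    filter_upwards [hlt, hΩμe] with z hz hz'
    rw [← hz', (hμs z hz).2, hsub z hz]
  have g1 : Gst ν (hstar μ ν) = Gst ρ z₀ := by
    rw [← hΩ0] at hlν ⊢
    refine tendsto_nhds_unique ((Gst_analytic hcν hlν).continuousAt.tendsto.comp tΩ) (tρ.congr' ?_)
    filter_upwards [hlt] with z hz using hsub z hz
  have g2 : Gst μ (Ωμ z₀) = Gst ρ z₀ := by
    refine tendsto_nhds_unique ((Gst_analytic hcμ hlμ).continuousAt.tendsto.comp tΩμ)
      (tρ.congr' ?_)
    filter_upwards [hlt] with z hz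
    rw [Function.comp_apply, (hμs z hz).2, hsub z hz]
  have hstar_dom : hstar μ ν ∈ FhatDom μ ν := by
    obtain ⟨x, hx, hx'⟩ := exists_between hlμ
    exact (mem_FhatDom hcμ hcν).mpr
      ⟨hlν, x, hx', by rw [g1, ← g2]; exact Gst_strictMono hcμ hlμ hx' hx⟩
  refine hstar_not_regular hcμ hcν hstar_dom ?_
  have hFa : AnalyticAt ℝ (Fhat μ ν) (Ω z₀) := by rw [hΩ0]; exact Fhat_analytic hcμ hcν hstar_dom
  have heq : (fun z => Fhat μ ν (Ω z)) =ᶠ[nhds z₀] fun z => z := by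
    refine eventuallyEq_of_left (hFa.fun_comp hΩ) analyticAt_id ?_
    filter_upwards [hlt, hΩe] with z hz hz'
    rw [← hz']
    exact (sub_spec (hmem z hz)).2
  have h1 := hFa.differentiableAt.hasDerivAt.comp z₀ hΩ.differentiableAt.hasDerivAt
  have h2 := (h1.congr_of_eventuallyEq heq.symm).unique (hasDerivAt_id' z₀)
  rw [hΩ0] at h2
  exact pos_of_mul_pos_left (h2 ▸ one_pos) (by linarith)

theorem image_eq (hcμ : HasCompactSupp μ) (hcν : HasCompactSupp ν) {ρ : Measure ℝ}
    (hρ : IsFreeAdd μ ν ρ) : Fhat μ ν '' Iio (hstar μ ν) = Iio (aInf ρ) := by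
  refine Subset.antisymm (fun z hz => image_subset hcμ hcν hρ hz) fun z hz => ?_
  by_contra hcon
  set J := Fhat μ ν '' Iio (hstar μ ν) with hJ
  have hub : ∀ y ∈ J, y < z := fun y hy => by
    by_contra hzy
    exact hcon (image_lower hcμ hcν hy (not_lt.mp hzy))
  have hne : J.Nonempty := by
    obtain ⟨h₀, hh₀, -⟩ := near_bot_lt_hstar hcμ hcν
    exact ⟨_, mem_image_of_mem _ hh₀⟩
  have hbdd : BddAbove J := ⟨z, fun y hy => (hub y hy).le⟩
  refine not_image_Iio hcμ hcν hρ (z₀ := sSup J)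
    (lt_of_le_of_lt (csSup_le hne fun y hy => (hub y hy).le) hz) ?_
  ext y
  constructor
  · intro hy
    obtain ⟨y', h1, h2⟩ := image_open hcμ hcν hy
    exact lt_of_lt_of_le h1 (le_csSup hbdd h2)
  · intro hy
    obtain ⟨y', h1, h2⟩ := exists_lt_of_lt_csSup hne hy
    exact image_lower hcμ hcν h1 h2.le

end Pair



/-- solvability of `F̂_{μ,ν}(h) = z` to the left of `h*_{μ,ν}`, with
uniqueness and the identity `G_ρ(z) = G_ν(h)`. -/
theorem statement4 (μ ν ρ : MeasureTheory.Measure ℝ)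
    [MeasureTheory.IsProbabilityMeasure μ] [MeasureTheory.IsProbabilityMeasure ν]
    (hcμ : HasCompactSupp μ) (hcν : HasCompactSupp ν) (hnd : Nondeg μ)
    (hρ : IsFreeAdd μ ν ρ) (z : ℝ) :
    ((∃ h ∈ FhatDom μ ν, h < hstar μ ν ∧ Fhat μ ν h = z) ↔ z < aInf ρ) ∧
    (z < aInf ρ → ∃! h : ℝ, h ∈ FhatDom μ ν ∧ h < hstar μ ν ∧ Fhat μ ν h = z) ∧
    (z < aInf ρ → ∀ h ∈ FhatDom μ ν, h < hstar μ ν → Fhat μ ν h = z →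
      Gst ρ z = Gst ν h) := by
  have himg := image_eq hcμ hcν hρ
  have hmono := Fhat_strictMono hcμ hcν
  have hiff : (∃ h ∈ FhatDom μ ν, h < hstar μ ν ∧ Fhat μ ν h = z) ↔ z < aInf ρ := by
    constructor
    · rintro ⟨h, -, h1, rfl⟩
      have : Fhat μ ν h ∈ Iio (aInf ρ) := himg ▸ mem_image_of_mem _ h1
      exact this
    · intro hz
      obtain ⟨h, h1, h2⟩ : z ∈ Fhat μ ν '' Iio (hstar μ ν) := himg ▸ hz
      exact ⟨h, (of_lt_hstar hcμ hcν h1).1, h1, h2⟩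
  refine ⟨hiff, fun hz => ?_, fun hz h _ h1 h2 => ?_⟩
  · obtain ⟨h, h0, h1, h2⟩ := hiff.mpr hz
    exact ⟨h, ⟨h0, h1, h2⟩, fun h' hh' => hmono.injOn hh'.2.1 h1 (hh'.2.2.trans h2.symm)⟩
  · have hmem : ∀ t < aInf ρ, t ∈ Fhat μ ν '' Iio (hstar μ ν) := fun t ht => himg ▸ ht
    have hs := sub_spec (hmem z hz)
    rw [subordination hcμ hcν hρ le_rfl hmem hz,
      hmono.injOn hs.1 h1 (hs.2.trans h2.symm)]
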